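/- arXiv:1707.07629 — 2 statements merged into one kernel-verified Lean document; each statement's English description precedes it below -/
import Mathlib

section
/- Let M and M′ be n×n integer matrices, both with nonzero determinant and both in right Hermite normal form. If there exists an n×n unimodular matrix U with M = M′·U, then M = M′. -/
open Matrix

/-- An `n × n` integer matrix is unimodular if its determinant is `1` or `-1`. -/
def Unimodular {n : ℕ} (U : Matrix (Fin n) (Fin n) ℤ) : Prop :=
  U.det = 1 ∨ U.det = -1

/-- A square integer matrix is in right Hermite normal form: it is lower triangular,
its diagonal entries are positive, and each entry to the left of the diagonal is
nonnegative and smaller than the diagonal entry of its row. -/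
def RHNF {n : ℕ} (H : Matrix (Fin n) (Fin n) ℤ) : Prop :=
  (∀ i j, i < j → H i j = 0) ∧
  (∀ i, 0 < H i i) ∧
  (∀ i j, j < i → 0 ≤ H i j ∧ H i j < H i i)

theorem stmt_2 {n : ℕ} (M M' : Matrix (Fin n) (Fin n) ℤ)
    (hM : M.det ≠ 0) (hM' : M'.det ≠ 0) (h1 : RHNF M) (h2 : RHNF M')
    (U : Matrix (Fin n) (Fin n) ℤ) (hU : Unimodular U) (h : M = M' * U) :
    M = M' := by
  obtain ⟨a1, b1, c1⟩ := h1
  obtain ⟨a2, b2, c2⟩ := h2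
  have hs : ∀ i j, M i j = ∑ k, M' i k * U k j := fun i j => by rw [h, Matrix.mul_apply]
  have hup : ∀ i j, i < j → U i j = 0 := by
    intro i
    induction i using WellFoundedLT.induction with
    | ind i ih =>
      intro j hij
      have e := hs i j
      rw [a1 i j hij, Finset.sum_eq_single i] at e
      · rcases mul_eq_zero.mp e.symm with e | e
        · exact absurd e (b2 i).ne'
        · exact e
      · intro k _ hk
        rcases lt_or_gt_of_ne hk with hk | hk
        · rw [ih k hk j (hk.trans hij), mul_zero]
        · rw [a2 i k hk, zero_mul]
      · simp
  have hdiag : ∀ i, M i i = M' i i * U i i := by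
    intro i
    rw [hs i i, Finset.sum_eq_single i]
    · intro k _ hk
      rcases lt_or_gt_of_ne hk with hk | hk
      · rw [hup k i hk, mul_zero]
      · rw [a2 i k hk, zero_mul]
    · simp
  have hdet : U.det = ∏ i, U i i :=
    Matrix.det_of_lowerTriangular U (fun i j hij => hup i j hij)
  have hone : ∀ i, U i i = 1 := by
    intro i
    have hpos : 0 < U i i := by
      have e := b1 i
      rw [hdiag i] at e
      exact pos_of_mul_pos_right e (b2 i).le |> fun t => t
    have hd : U i i ∣ U.det := by
      rw [hdet]
      exact Finset.dvd_prod_of_mem (fun i => U i i) (Finset.mem_univ i)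
    have hd1 : U i i ∣ 1 := by
      rcases hU with e | e
      · rwa [e] at hd
      · rw [e] at hd
        exact (dvd_neg.mp hd)
    exact Int.eq_one_of_dvd_one hpos.le hd1
  have hlow : ∀ j i, j < i → U i j = 0 := by
    intro j i
    induction i using WellFoundedLT.induction with
    | ind i ih =>
      intro hji
      have e := hs i j
      rw [Fintype.sum_eq_add j i hji.ne, hone j] at e
      · have d := hdiag i
        rw [hone i, mul_one] at d
        have p := c1 i j hji
        have q := c2 i j hji
        rw [d] at p
        have hp := b2 i
        apply Int.eq_zero_of_abs_lt_dvd (m := M' i i) (x := M' i i * U i j) (Dvd.intro _ rfl) 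
          (by rw [abs_lt]; constructor <;> linarith) |> mul_eq_zero.mp |> Or.resolve_left
        exact hp.ne'
      · rintro k ⟨hkj, hki⟩
        rcases lt_or_gt_of_ne hki with hk | hk
        · rcases lt_or_gt_of_ne hkj with hk2 | hk2
          · rw [hup k j hk2, mul_zero]
          · rw [ih k hk hk2, mul_zero]
        · rw [a2 i k hk, zero_mul]
  have hU1 : U = 1 := by
    ext i j
    rcases lt_trichotomy i j with hij | hij | hij
    · rw [hup i j hij, Matrix.one_apply_ne hij.ne]
    · subst hij
      rw [hone i, Matrix.one_apply_eq]
    · rw [hlow j i hij, Matrix.one_apply_ne hij.ne']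
  rw [h, hU1, mul_one]
end

section
/- Let A be an r×n integer matrix of rank r (0 < r < n) of the form [N O], where N is an r×r matrix in left Hermite normal form and O is the zero block, and let B be an (n−r)×n integer matrix. Suppose the stacked n×n matrix [A; B] satisfies [A; B] = W·R for some n×n unimodular matrix W, where R is an n×n nonsingular integer matrix in left Hermite normal form. Then A equals the matrix formed by the first r rows of R. -/
open Matrix

/-- A square integer matrix is in left Hermite normal form: it is lower triangular,
its diagonal entries are positive, and each entry below the diagonal is nonnegative
and smaller than the diagonal entry of its column. -/
def LHNF {n : ℕ} (H : Matrix (Fin n) (Fin n) ℤ) : Prop :=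
  (∀ i j, i < j → H i j = 0) ∧
  (∀ i, 0 < H i i) ∧
  (∀ i j, j < i → 0 ≤ H i j ∧ H i j < H j j)

/-- The matrix `[A; B]` obtained by stacking `A` above `B`. -/
def stack {r k n : ℕ} (A : Matrix (Fin r) (Fin n) ℤ) (B : Matrix (Fin k) (Fin n) ℤ) :
    Matrix (Fin (r + k)) (Fin n) ℤ :=
  (Matrix.fromRows A B).submatrix finSumFinEquiv.symm id

/-- If `A` has the form `[N O]` with `N` an `r × r` matrix in left Hermite normal
form and `O` the zero block, and `[A; B] = W · R` for a unimodular `W` and a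
nonsingular `R` in left Hermite normal form, then `A` equals the first `r` rows of
`R`. -/
theorem stmt_12 {r k : ℕ} (hr : 0 < r) (hk : 0 < k)
    (A : Matrix (Fin r) (Fin (r + k)) ℤ) (hrank : A.rank = r)
    (htri : ∀ (i : Fin r) (j : Fin (r + k)), (i : ℕ) < (j : ℕ) → A i j = 0)
    (hdiag : ∀ i : Fin r, 0 < A i (Fin.castAdd k i))
    (hlt : ∀ i j : Fin r, j < i →
      0 ≤ A i (Fin.castAdd k j) ∧ A i (Fin.castAdd k j) < A j (Fin.castAdd k j))
    (B : Matrix (Fin k) (Fin (r + k)) ℤ)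
    (W R : Matrix (Fin (r + k)) (Fin (r + k)) ℤ) (hW : Unimodular W)
    (hR : LHNF R) (hRdet : R.det ≠ 0)
    (h : stack A B = W * R) :
    ∀ (i : Fin r) (j : Fin (r + k)), A i j = R (Fin.castAdd k i) j := by
  obtain ⟨hR1, hR2, hR3⟩ := hR
  have hA : ∀ (i : Fin r) (j : Fin (r + k)),
      A i j = ∑ l, W (Fin.castAdd k i) l * R l j := by
    intro i j
    have := congrFun (congrFun h (Fin.castAdd k i)) j
    rw [Matrix.mul_apply] at this
    rw [← this]
    simp [stack]
  -- the first `r` rows of `W` are lower triangular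
  have hW0 : ∀ (i : Fin r) (m : ℕ) (l : Fin (r + k)), r + k - l.val = m → (i : ℕ) < l →
      W (Fin.castAdd k i) l = 0 := by
    intro i m
    induction m using Nat.strong_induction_on with
    | _ m ih =>
      intro l hl hil
      have h1 := hA i l
      rw [htri i l hil, Finset.sum_eq_single l] at h1
      · have := (hR2 l).ne'
        rcases mul_eq_zero.mp h1.symm with h2 | h2
        · exact h2
        · exact absurd h2 this
      · intro b _ hb
        rcases lt_or_gt_of_ne hb with hb | hb
        · rw [hR1 b l hb, mul_zero]
        · have hb' : l.val < b.val := hb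
          rw [ih (r + k - b.val) (by have := b.isLt; omega) b rfl (by omega), zero_mul]
      · simp
  have hW0' : ∀ (i : Fin r) (l : Fin (r + k)), (i : ℕ) < l → W (Fin.castAdd k i) l = 0 :=
    fun i l => hW0 i _ l rfl
  have hAd : ∀ i : Fin r, A i (Fin.castAdd k i) =
      W (Fin.castAdd k i) (Fin.castAdd k i) * R (Fin.castAdd k i) (Fin.castAdd k i) := by
    intro i
    rw [hA, Finset.sum_eq_single (Fin.castAdd k i)]
    · intro b _ hb
      rcases lt_or_gt_of_ne hb with hb | hb
      · rw [hR1 b _ hb, mul_zero]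
      · rw [hW0' i b hb, zero_mul]
    · simp
  have hdet : W.det = (∏ i : Fin r, W (Fin.castAdd k i) (Fin.castAdd k i)) *
      (W.submatrix (Fin.natAdd r) (Fin.natAdd r) : Matrix (Fin k) (Fin k) ℤ).det := by
    rw [← Matrix.det_submatrix_equiv_self (finSumFinEquiv (m := r) (n := k)) W]
    have hb : W.submatrix (finSumFinEquiv (m := r) (n := k)) (finSumFinEquiv (m := r) (n := k)) =
        Matrix.fromBlocks (W.submatrix (Fin.castAdd k) (Fin.castAdd k)) 0
          (W.submatrix (Fin.natAdd r) (Fin.castAdd k))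
          (W.submatrix (Fin.natAdd r) (Fin.natAdd r)) := by
      ext i j
      rcases i with i | i <;> rcases j with j | j <;> simp
      exact hW0' i _ (by have := i.isLt; simp; omega)
    rw [hb, Matrix.det_fromBlocks_zero₁₂]
    congr 1
    rw [Matrix.det_of_lowerTriangular]
    · rfl
    · intro i j hij
      exact hW0' i _ hij
  have hunit : IsUnit W.det := by
    rcases hW with h | h <;> rw [h] <;> simp
  have hWd : ∀ i : Fin r, W (Fin.castAdd k i) (Fin.castAdd k i) = 1 := by
    intro i
    rw [hdet] at hunit
    have h1 := isUnit_of_mul_isUnit_left hunit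
    have h2 : IsUnit (W (Fin.castAdd k i) (Fin.castAdd k i)) :=
      isUnit_of_dvd_unit (Finset.dvd_prod_of_mem
        (fun i : Fin r => W (Fin.castAdd k i) (Fin.castAdd k i)) (Finset.mem_univ i)) h1
    rcases Int.isUnit_iff.mp h2 with h3 | h3
    · exact h3
    · have := hAd i
      rw [h3] at this
      have := hdiag i
      have := hR2 (Fin.castAdd k i)
      omega
  -- below the diagonal
  have hWl : ∀ (i : Fin r) (m : ℕ) (j : Fin r), r - j.val = m → j < i →
      W (Fin.castAdd k i) (Fin.castAdd k j) = 0 := by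
    intro i m
    induction m using Nat.strong_induction_on with
    | _ m ih =>
      intro j hj hji
      have hlt' : Fin.castAdd k j < Fin.castAdd k i := hji
      have h1 := hA i (Fin.castAdd k j)
      rw [← Finset.sum_subset
        (Finset.subset_univ {Fin.castAdd k j, Fin.castAdd k i}) ?_,
        Finset.sum_pair hlt'.ne, hWd i, one_mul] at h1
      · have h2 := hAd j
        rw [hWd j, one_mul] at h2
        have h3 := hlt i j hji
        have h4 := hR3 _ _ hlt'
        rw [h2] at h3
        have h5 := hR2 (Fin.castAdd k j)
        by_contra hne
        rcases lt_or_gt_of_ne hne with hn | hn <;> nlinarith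
      · intro b _ hb
        simp only [Finset.mem_insert, Finset.mem_singleton, not_or] at hb
        rcases lt_or_gt_of_ne hb.1 with hb1 | hb1
        · rw [hR1 b _ hb1, mul_zero]
        rcases lt_or_gt_of_ne hb.2 with hb2 | hb2
        · have e1 : j.val < b.val := hb1
          have e2 : b.val < i.val := hb2
          have hi := i.isLt
          have := ih (r - b.val) (by omega) ⟨b.val, by omega⟩ rfl e2
          have e : Fin.castAdd k (⟨b.val, by omega⟩ : Fin r) = b := by ext; rfl
          rw [e] at this
          rw [this, zero_mul]
        · rw [hW0' i b hb2, zero_mul]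
  intro i j
  rw [hA, Finset.sum_eq_single (Fin.castAdd k i), hWd, one_mul]
  · intro b _ hb
    rcases lt_or_gt_of_ne hb with hb | hb
    · have e2 : b.val < i.val := hb
      have hi := i.isLt
      have := hWl i _ ⟨b.val, by omega⟩ rfl e2
      have e : Fin.castAdd k (⟨b.val, by omega⟩ : Fin r) = b := by ext; rfl
      rw [e] at this
      rw [this, zero_mul]
    · rw [hW0' i b hb, zero_mul]
  · simp
end
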